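/- Let n, s, q be integers with 1 ≤ q ≤ s ≤ n, let E be a real inner product space, let L_1,…,L_n : E → ℝ be convex and G₁-Lipschitz, and let R : E → ℝ be convex and G₂-Lipschitz. Define L_q(θ) := (1/q) ∑_{j=1}^{n} γ_j · b_{(j)}(θ) + R(θ), where b_{(1)}(θ) ≥ ⋯ ≥ b_{(n)}(θ) are the values L_1(θ),…,L_n(θ) sorted in nonincreasing order. Let θ* be a minimizer of L_q over E, let T ≥ 0 be an integer, let η_0,…,η_T > 0, and fix an initial point θ⁰ ∈ E. Let 𝒮 := {S ⊆ {1,…,n} : |S| = s}. For each ω = (S_0,…,S_T) ∈ 𝒮^{T+1}, define recursively θ_ω⁰ := θ⁰ and θ_ω^{t+1} := θ_ω^t − η_t g_ω^t, where g_ω^t is a subgradient at θ_ω^t of the convex function θ ↦ (1/q) ∑_{i ∈ Q(S_t, θ_ω^t)} L_i(θ) + R(θ), Q(S, θ) denotes the set of q indices i ∈ S with the largest values L_i(θ) (ties broken in favor of smaller index), and the choice g_ω^t depends on ω only through (S_0,…,S_t). Then min_{0 ≤ t ≤ T} [ |𝒮|^{-(T+1)} ∑_{ω ∈ 𝒮^{T+1}}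 ( L_q(θ_ω^t) − L_q(θ*) ) ] ≤ ( 2(G₁² + G₂²) ∑_{t=0}^{T} η_t² + ‖θ* − θ⁰‖² ) / ( 2 ∑_{t=0}^{T} η_t ). (Theorem 2, part 1: convergence of ordered SGD in the convex setting, with the expectation written as a finite average over all mini-batch sequences.) -/

import Mathlib

open RealInnerProductSpace

/-- `sortDesc a` is the vector `a : Fin n → ℝ` sorted in nonincreasing order (with multiplicity). -/
noncomputable def sortDesc {n : ℕ} (a : Fin n → ℝ) : Fin n → ℝ :=
  fun j => a (Tuple.sort (fun i => -a i) j)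

/-- `gammaR n s q j` is the coefficient `γ_{j+1} = (∑_{l=0}^{q-1} C(j, l)·C(n-1-j, s-l-1)) / C(n,s)`
(with the `Fin n` index `j` corresponding to the paper's index `j+1 ∈ {1,…,n}`). -/
noncomputable def gammaR (n s q : ℕ) (j : Fin n) : ℝ :=
  ((∑ l ∈ Finset.range q,
      Nat.choose j.val l * Nat.choose (n - 1 - j.val) (s - l - 1) : ℕ) : ℝ)
    / (Nat.choose n s : ℝ)

/-!
For a mini-batch `S`, the top-`q` sum `∑_{i ∈ Q(S, θ)} L_i(θ)` is the maximum of `∑_{i ∈ Q} L_i(θ)`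
over all `Q ⊆ S` of size `q`. Two consequences drive the argument.

* A subgradient at `θ` of the sum over the fixed set `Q(S, θ)` is a subgradient at `θ` of the
  top-`q` sum itself.
* The top-`q` sum does not depend on how ties are broken. After sorting the losses it is the sum
  over the `q` smallest positions in `S`, and exactly `∑_{l < q} C(j, l) C(n - 1 - j, s - l - 1)`
  batches have the position `j` among their `q` smallest. Hence the objective is the mean of the
  batch objectives over a uniform mini-batch.

Ordered SGD is therefore the stochastic subgradient method for its objective, and the usual
expansion of `‖z - θ^{t+1}‖²` telescopes in expectation.
-/

section TopSubset

open Finset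

/-- `Q` consists of `q` elements of `S` at which `a` is largest; ties may be broken arbitrarily. -/
def IsTopSubset {ι α : Type*} [LE α] (a : ι → α) (q : ℕ) (S Q : Finset ι) : Prop :=
  Q ⊆ S ∧ #Q = q ∧ ∀ i ∈ Q, ∀ k ∈ S, k ∉ Q → a k ≤ a i

namespace IsTopSubset

variable {ι : Type*} {q : ℕ} {S Q Q' : Finset ι}

theorem of_lt_or_eq_and_lt {α : Type*} [Preorder α] [DecidableEq ι] [LT ι] {a : ι → α}
    (hQ : Q ⊆ S ∧ #Q = q ∧ ∀ i ∈ Q, ∀ k ∈ S \ Q, a k < a i ∨ a k = a i ∧ i < k) :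
    IsTopSubset a q S Q :=
  ⟨hQ.1, hQ.2.1, fun i hi k hk hkQ =>
    (hQ.2.2 i hi k (mem_sdiff.mpr ⟨hk, hkQ⟩)).elim le_of_lt fun htie => htie.1.le⟩

theorem map_symm {κ α : Type*} [LE α] {a : ι → α} (hQ : IsTopSubset a q S Q) (e : κ ≃ ι) :
    IsTopSubset (a ∘ e) q (S.map e.symm.toEmbedding) (Q.map e.symm.toEmbedding) := by
  obtain ⟨hsub, hcard, htop⟩ := hQ
  refine ⟨map_subset_map.mpr hsub, by rw [card_map, hcard], fun i hi k hk hkQ => ?_⟩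
  simp only [mem_map_equiv, Equiv.symm_symm] at hi hk hkQ
  exact htop _ hi _ hk hkQ

variable {M : Type*} [AddCommMonoid M] [PartialOrder M] [IsOrderedAddMonoid M] {a : ι → M}

theorem sum_le_sum (hQ : IsTopSubset a q S Q) (hsub : Q' ⊆ S) (hcard : #Q' = q) :
    ∑ i ∈ Q', a i ≤ ∑ i ∈ Q, a i := by
  classical
  obtain ⟨-, hQcard, hQtop⟩ := hQ
  let e : ↥(Q' \ Q) ≃ ↥(Q \ Q') :=
    equivOfCardEq (card_sdiff_comm (hcard.trans hQcard.symm))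
  have hsdiff : ∑ i ∈ Q' \ Q, a i ≤ ∑ i ∈ Q \ Q', a i := by
    rw [← sum_coe_sort (Q' \ Q), ← sum_coe_sort (Q \ Q'), ← Equiv.sum_comp e]
    refine Finset.sum_le_sum fun k _ => ?_
    obtain ⟨hk, hkQ⟩ := mem_sdiff.mp k.2
    exact hQtop _ (mem_sdiff.mp (e k).2).1 _ (hsub hk) hkQ
  calc ∑ i ∈ Q', a i = ∑ i ∈ Q' ∩ Q, a i + ∑ i ∈ Q' \ Q, a i := (sum_inter_add_sum_sdiff _ _ _).symm
    _ ≤ ∑ i ∈ Q ∩ Q', a i + ∑ i ∈ Q \ Q', a i := by rw [inter_comm]; gcongr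
    _ = ∑ i ∈ Q, a i := sum_inter_add_sum_sdiff _ _ _

theorem sum_eq_sum (hQ : IsTopSubset a q S Q) (hQ' : IsTopSubset a q S Q') :
    ∑ i ∈ Q, a i = ∑ i ∈ Q', a i :=
  le_antisymm (hQ'.sum_le_sum hQ.1 hQ.2.1) (hQ.sum_le_sum hQ'.1 hQ'.2.1)

end IsTopSubset

end TopSubset

section FirstElements

open Finset

variable {ι : Type*} [LinearOrder ι]

/-- The `q` smallest elements of `P`, or all of `P` if it has fewer: those with fewer than `q`
predecessors in `P`. -/
def firstElements (q : ℕ) (P : Finset ι) : Finset ι :=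
  {j ∈ P | #{i ∈ P | i < j} < q}

theorem strictMonoOn_card_filter_lt (P : Finset ι) :
    StrictMonoOn (fun j => #{i ∈ P | i < j}) (P : Set ι) := by
  intro i hi j _ hij
  refine card_lt_card ((ssubset_iff_of_subset fun k hk => ?_).mpr ⟨i, ?_, ?_⟩)
  · simp only [mem_filter] at hk ⊢
    exact ⟨hk.1, hk.2.trans hij⟩
  · exact mem_filter.mpr ⟨hi, hij⟩
  · simp

theorem image_card_filter_lt (P : Finset ι) :
    P.image (fun j => #{i ∈ P | i < j}) = range #P := by
  refine eq_of_subset_of_card_le (image_subset_iff.mpr fun j hj => mem_range.mpr ?_) ?_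
  · exact card_lt_card (filter_ssubset.mpr ⟨j, hj, lt_irrefl j⟩)
  · rw [card_range, card_image_of_injOn (strictMonoOn_card_filter_lt P).injOn]

theorem card_firstElements {q : ℕ} {P : Finset ι} (hq : q ≤ #P) : #(firstElements q P) = q := by
  have hinj := (strictMonoOn_card_filter_lt P).injOn.mono
    (coe_subset.mpr (filter_subset (fun j => #{i ∈ P | i < j} < q) P))
  calc #(firstElements q P) = #{r ∈ P.image (fun j => #{i ∈ P | i < j}) | r < q} := by
        rw [filter_image, card_image_of_injOn hinj, firstElements]
    _ = #(range q) := by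
        rw [image_card_filter_lt]
        congr 1
        grind
    _ = q := card_range q

theorem isTopSubset_firstElements {α : Type*} [Preorder α] {b : ι → α} (hb : Antitone b) {q : ℕ}
    {P : Finset ι} (hq : q ≤ #P) : IsTopSubset b q P (firstElements q P) := by
  refine ⟨filter_subset _ _, card_firstElements hq, fun i hi k hk hk' => hb ?_⟩
  simp only [firstElements, mem_filter, hk, true_and, not_lt] at hi hk'
  exact (((strictMonoOn_card_filter_lt P).lt_iff_lt hi.1 hk).mp (hi.2.trans_le hk')).le

end FirstElements

section Counting

open Finset

variable {ι : Type*} [LinearOrder ι]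

theorem insert_filter_lt_union_filter_gt {P : Finset ι} {j : ι} (hj : j ∈ P) :
    insert j ({i ∈ P | i < j} ∪ {i ∈ P | j < i}) = P := by
  grind

variable [LocallyFiniteOrderBot ι] [LocallyFiniteOrderTop ι]

theorem card_insert_union_of_subset_Iio_Ioi {A B : Finset ι} {j : ι} (hA : A ⊆ Iio j)
    (hB : B ⊆ Ioi j) : #(insert j (A ∪ B)) = #A + #B + 1 := by
  have hdisj : Disjoint A B := disjoint_left.mpr fun i hiA hiB =>
    lt_asymm (mem_Iio.mp (hA hiA)) (mem_Ioi.mp (hB hiB))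
  rw [card_insert_of_notMem (by grind), card_union_of_disjoint hdisj]

theorem filter_lt_insert_union_of_subset_Iio_Ioi {A B : Finset ι} {j : ι} (hA : A ⊆ Iio j)
    (hB : B ⊆ Ioi j) : {i ∈ insert j (A ∪ B) | i < j} = A := by
  grind

theorem filter_gt_insert_union_of_subset_Iio_Ioi {A B : Finset ι} {j : ι} (hA : A ⊆ Iio j)
    (hB : B ⊆ Ioi j) : {i ∈ insert j (A ∪ B) | j < i} = B := by
  grind

variable [Fintype ι]

theorem card_filter_mem_and_card_filter_lt_eq (j : ι) (l m : ℕ) :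
    #{P ∈ powersetCard (l + m + 1) univ | j ∈ P ∧ #{i ∈ P | i < j} = l} =
      (#(Iio j)).choose l * (#(Ioi j)).choose m := by
  rw [← card_powersetCard, ← card_powersetCard, ← card_product]
  refine card_nbij' (fun P => ({i ∈ P | i < j}, {i ∈ P | j < i}))
    (fun AB => insert j (AB.1 ∪ AB.2)) ?_ ?_ ?_ ?_
  · intro P hP
    obtain ⟨hcard, hj, hl⟩ : #P = l + m + 1 ∧ j ∈ P ∧ #{i ∈ P | i < j} = l := by simpa using hP
    have hlt : {i ∈ P | i < j} ⊆ Iio j := fun i hi => mem_Iio.mpr (mem_filter.mp hi).2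
    have hgt : {i ∈ P | j < i} ⊆ Ioi j := fun i hi => mem_Ioi.mpr (mem_filter.mp hi).2
    have hsum := card_insert_union_of_subset_Iio_Ioi hlt hgt
    rw [insert_filter_lt_union_filter_gt hj] at hsum
    exact mem_product.mpr
      ⟨mem_powersetCard.mpr ⟨hlt, hl⟩, mem_powersetCard.mpr ⟨hgt, by lia⟩⟩
  · rintro ⟨A, B⟩ hAB
    obtain ⟨⟨hA, rfl⟩, hB, rfl⟩ : (A ⊆ Iio j ∧ #A = l) ∧ B ⊆ Ioi j ∧ #B = m := by
      simpa only [coe_product, Set.mem_prod, mem_coe, mem_powersetCard] using hAB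
    simp [filter_lt_insert_union_of_subset_Iio_Ioi hA hB,
      card_insert_union_of_subset_Iio_Ioi hA hB]
  · intro P hP
    exact insert_filter_lt_union_filter_gt (mem_filter.mp hP).2.1
  · rintro ⟨A, B⟩ hAB
    obtain ⟨⟨hA, -⟩, hB, -⟩ : (A ⊆ Iio j ∧ #A = l) ∧ B ⊆ Ioi j ∧ #B = m := by
      simpa only [coe_product, Set.mem_prod, mem_coe, mem_powersetCard] using hAB
    exact Prod.ext (filter_lt_insert_union_of_subset_Iio_Ioi hA hB)
      (filter_gt_insert_union_of_subset_Iio_Ioi hA hB)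

theorem card_filter_mem_firstElements {s q : ℕ} (hqs : q ≤ s) (j : ι) :
    #{P ∈ powersetCard s univ | j ∈ firstElements q P} =
      ∑ l ∈ range q, (#(Iio j)).choose l * (#(Ioi j)).choose (s - l - 1) := by
  rw [card_eq_sum_card_fiberwise (f := fun P => #{i ∈ P | i < j}) (t := range q)]
  · refine sum_congr rfl fun l hl => ?_
    have hlq : l < q := mem_range.mp hl
    rw [← card_filter_mem_and_card_filter_lt_eq, show l + (s - l - 1) + 1 = s by lia]
    congr 1
    grind [firstElements]
  · intro P hP
    exact mem_range.mpr (mem_filter.mp (mem_filter.mp hP).2).2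

end Counting

section Averaging

open Finset
open scoped BigOperators

variable {n s q : ℕ}

/-- The mini-batches: subsets of `{1, …, n}` of size `s`. -/
abbrev Batch (n s : ℕ) : Type :=
  {S : Finset (Fin n) // #S = s}

theorem card_batch (n s : ℕ) : Fintype.card (Batch n s) = n.choose s := by
  rw [Fintype.card_finset_len, Fintype.card_fin]

theorem nonempty_batch (hsn : s ≤ n) : Nonempty (Batch n s) :=
  Fintype.card_pos_iff.mp ((card_batch n s).symm ▸ Nat.choose_pos hsn)

theorem gammaR_eq_card_div_choose (hqs : q ≤ s) (j : Fin n) :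
    gammaR n s q j =
      (#{P ∈ powersetCard s (univ : Finset (Fin n)) | j ∈ firstElements q P} : ℝ) / n.choose s := by
  rw [card_filter_mem_firstElements hqs, Fin.card_Iio, Fin.card_Ioi, gammaR]

theorem antitone_sortDesc (a : Fin n → ℝ) : Antitone (sortDesc a) := fun _ _ hij =>
  neg_le_neg_iff.mp (Tuple.monotone_sort (fun i => -a i) hij)

theorem sum_eq_sum_firstElements_sortDesc {a : Fin n → ℝ} {S Q : Finset (Fin n)}
    (hQ : IsTopSubset a q S Q) :
    ∑ i ∈ Q, a i =
      ∑ j ∈ firstElements q (S.map (Tuple.sort fun i => -a i).symm.toEmbedding), sortDesc a j := by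
  have hqS : q ≤ #S := hQ.2.1 ▸ card_le_card hQ.1
  have hmap : IsTopSubset (sortDesc a) q _ _ := hQ.map_symm (Tuple.sort fun i => -a i)
  rw [← hmap.sum_eq_sum (isTopSubset_firstElements (antitone_sortDesc a) (by rwa [card_map]))]
  simp [sortDesc]

theorem sum_powersetCard_map_equiv {ι κ M : Type*} [Fintype ι] [Fintype κ] [AddCommMonoid M]
    (s : ℕ) (e : ι ≃ κ) (f : Finset κ → M) :
    ∑ S ∈ powersetCard s univ, f (S.map e.toEmbedding) = ∑ P ∈ powersetCard s univ, f P :=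
  sum_equiv (Equiv.finsetCongr e) (by simp) fun _ _ => rfl

theorem sum_powersetCard_sum_firstElements {ι M : Type*} [Fintype ι] [LinearOrder ι]
    [AddCommMonoid M] (s q : ℕ) (b : ι → M) :
    ∑ P ∈ powersetCard s univ, ∑ j ∈ firstElements q P, b j =
      ∑ j, #{P ∈ powersetCard s univ | j ∈ firstElements q P} • b j := by
  simp_rw [← sum_const]
  exact sum_comm' (by simp)

theorem expect_sum_isTopSubset (hqs : q ≤ s) {a : Fin n → ℝ} {Q : Batch n s → Finset (Fin n)}
    (hQ : ∀ S, IsTopSubset a q S.1 (Q S)) :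
    𝔼 S, ∑ i ∈ Q S, a i = ∑ j, gammaR n s q j * sortDesc a j := by
  set π := Tuple.sort fun i => -a i
  have hreindex : ∑ S : Batch n s, ∑ j ∈ firstElements q (S.1.map π.symm.toEmbedding),
      sortDesc a j = ∑ P ∈ powersetCard s univ, ∑ j ∈ firstElements q P, sortDesc a j := by
    rw [← sum_subtype (powersetCard s univ) (by simp)
      fun S => ∑ j ∈ firstElements q (S.map π.symm.toEmbedding), sortDesc a j]
    exact sum_powersetCard_map_equiv s π.symm fun P => ∑ j ∈ firstElements q P, sortDesc a j
  rw [Fintype.expect_eq_sum_div_card, card_batch,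
    sum_congr rfl fun S _ => sum_eq_sum_firstElements_sortDesc (hQ S), hreindex,
    sum_powersetCard_sum_firstElements, sum_div]
  refine sum_congr rfl fun j _ => ?_
  rw [gammaR_eq_card_div_choose hqs, nsmul_eq_mul, mul_div_right_comm]

theorem expect_expect_update {ι β M : Type*} [Fintype ι] [DecidableEq ι] [Fintype β] [Nonempty β]
    [AddCommMonoid M] [Module ℚ≥0 M] (i : ι) (H : (ι → β) → M) :
    𝔼 ω, 𝔼 b, H (Function.update ω i b) = 𝔼 ω, H ω := by
  have hinv : Function.Involutive
      fun p : (ι → β) × β => (Function.update p.1 i p.2, p.1 i) := fun p => by simp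
  calc 𝔼 ω, 𝔼 b, H (Function.update ω i b)
      = 𝔼 p : (ι → β) × β, H (Function.update p.1 i p.2) :=
        (expect_product' univ univ fun ω b => H (Function.update ω i b)).symm
    _ = 𝔼 p : (ι → β) × β, H p.1 := Fintype.expect_equiv hinv.toPerm _ _ fun _ => rfl
    _ = 𝔼 ω, 𝔼 _b : β, H ω := expect_product' univ univ fun ω _ => H ω
    _ = 𝔼 ω, H ω := by simp only [Fintype.expect_const]

end Averaging

section Subgradient

variable {E : Type*} [NormedAddCommGroup E] [InnerProductSpace ℝ E]

/-- `g` is a subgradient of `f` at `x`. -/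
def IsSubgradientAt (f : E → ℝ) (x g : E) : Prop :=
  ∀ y, f x + ⟪g, y - x⟫ ≤ f y

theorem IsSubgradientAt.norm_le {f : E → ℝ} {x g : E} {K : ℝ} (hg : IsSubgradientAt f x g)
    (hf : ∀ y, f y - f x ≤ K * ‖y - x‖) : ‖g‖ ≤ |K| := by
  have hsq : ‖g‖ * ‖g‖ ≤ |K| * ‖g‖ := by
    calc ‖g‖ * ‖g‖ = ⟪g, x + g - x⟫ := by
          rw [add_sub_cancel_left, real_inner_self_eq_norm_mul_norm]
      _ ≤ f (x + g) - f x := by linarith [hg (x + g)]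
      _ ≤ K * ‖g‖ := by simpa using hf (x + g)
      _ ≤ |K| * ‖g‖ := by gcongr; exact le_abs_self K
  rcases (norm_nonneg g).eq_or_lt with hzero | hpos
  · exact hzero ▸ abs_nonneg K
  · exact le_of_mul_le_mul_right hsq hpos

theorem norm_sub_sub_smul_sq (z x g : E) (r : ℝ) :
    ‖z - (x - r • g)‖ ^ 2 = ‖z - x‖ ^ 2 + 2 * r * ⟪g, z - x⟫ + r ^ 2 * ‖g‖ ^ 2 := by
  rw [← sub_add, norm_add_sq_real, real_inner_smul_right, norm_smul, mul_pow, Real.norm_eq_abs,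
    sq_abs, real_inner_comm]
  ring

theorem IsSubgradientAt.two_mul_mul_sub_le {f : E → ℝ} {x g : E} (hg : IsSubgradientAt f x g)
    (z : E) {r : ℝ} (hr : 0 ≤ r) :
    2 * r * (f x - f z) ≤ ‖z - x‖ ^ 2 - ‖z - (x - r • g)‖ ^ 2 + r ^ 2 * ‖g‖ ^ 2 := by
  have hinner : f x - f z ≤ -⟪g, z - x⟫ := by linarith [hg z]
  have hscaled := mul_le_mul_of_nonneg_left hinner (mul_nonneg zero_le_two hr)
  rw [norm_sub_sub_smul_sq]
  linarith

end Subgradient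

section StochasticSubgradient

open Finset
open scoped BigOperators

variable {β E : Type*} [NormedAddCommGroup E] [InnerProductSpace ℝ E] {N : ℕ}

/-- The stochastic subgradient method on the sample space `Fin N → β`: on the sample path `ω`, step
`t` moves along a subgradient `g ω t` of the random function `f (ω t)`, chosen from `ω 0, …, ω t`
alone. The values `x ω t` for `t > N` and `g ω t` for `t ≥ N` are irrelevant. -/
structure IsStochasticSubgradientMethod (f : β → E → ℝ) (η : ℕ → ℝ) (x₀ : E)
    (x g : (Fin N → β) → ℕ → E) : Prop where
  init : ∀ ω, x ω 0 = x₀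
  step : ∀ ω (t : Fin N), x ω (t + 1) = x ω t - η t • g ω t
  isSubgradientAt : ∀ ω (t : Fin N), IsSubgradientAt (f (ω t)) (x ω t) (g ω t)
  nonanticipating : ∀ ω ω' (t : Fin N), (∀ t' ≤ t, ω t' = ω' t') → g ω t = g ω' t

namespace IsStochasticSubgradientMethod

variable {f : β → E → ℝ} {η : ℕ → ℝ} {x₀ : E} {x g : (Fin N → β) → ℕ → E}

theorem iterate_update (h : IsStochasticSubgradientMethod f η x₀ x g) (ω : Fin N → β) (t : Fin N)
    (b : β) {k : ℕ} (hk : k ≤ t) : x (Function.update ω t b) k = x ω k := by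
  induction k with
  | zero => rw [h.init, h.init]
  | succ k ih =>
    have hkt : k < t := hk
    let i : Fin N := ⟨k, hkt.trans t.2⟩
    have hg : g (Function.update ω t b) k = g ω k :=
      h.nonanticipating _ _ i fun t' ht' => Function.update_of_ne (ht'.trans_lt hkt).ne _ _
    rw [h.step _ i, h.step _ i, ih hkt.le, hg]

variable [Fintype β] [Nonempty β] {F : E → ℝ} {C : ℝ}

theorem expect_sample_eq (h : IsStochasticSubgradientMethod f η x₀ x g)
    (hF : ∀ y, 𝔼 b, f b y = F y) (t : Fin N) :
    𝔼 ω, f (ω t) (x ω t) = 𝔼 ω, F (x ω t) := by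
  rw [← expect_expect_update t]
  simp only [Function.update_self, h.iterate_update _ t _ le_rfl, hF]

theorem two_mul_mul_expect_sub_le (h : IsStochasticSubgradientMethod f η x₀ x g)
    (hF : ∀ y, 𝔼 b, f b y = F y) (hη : ∀ t < N, 0 ≤ η t) (hg : ∀ ω, ∀ t < N, ‖g ω t‖ ^ 2 ≤ C)
    (z : E) (t : Fin N) :
    2 * η t * 𝔼 ω, (F (x ω t) - F z) ≤
      𝔼 ω, ‖z - x ω t‖ ^ 2 - 𝔼 ω, ‖z - x ω (t + 1)‖ ^ 2 + C * η t ^ 2 := by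
  have hcomparator : 𝔼 ω : Fin N → β, f (ω t) z = 𝔼 _ω : Fin N → β, F z := by
    rw [← expect_expect_update t]
    simp only [Function.update_self, hF]
  have hpath (ω : Fin N → β) : 2 * η t * (f (ω t) (x ω t) - f (ω t) z) ≤
      ‖z - x ω t‖ ^ 2 - ‖z - x ω (t + 1)‖ ^ 2 + C * η t ^ 2 := by
    have hstep := (h.isSubgradientAt ω t).two_mul_mul_sub_le z (hη t t.2)
    rw [← h.step] at hstep
    linarith [mul_le_mul_of_nonneg_left (hg ω t t.2) (sq_nonneg (η t))]
  calc 2 * η t * 𝔼 ω, (F (x ω t) - F z)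
      = 𝔼 ω, 2 * η t * (f (ω t) (x ω t) - f (ω t) z) := by
        rw [← mul_expect, expect_sub_distrib, expect_sub_distrib, h.expect_sample_eq hF,
          hcomparator]
    _ ≤ 𝔼 ω, (‖z - x ω t‖ ^ 2 - ‖z - x ω (t + 1)‖ ^ 2 + C * η t ^ 2) :=
        expect_le_expect fun ω _ => hpath ω
    _ = _ := by rw [expect_add_distrib, expect_sub_distrib, Fintype.expect_const]

theorem sum_two_mul_mul_expect_sub_le (h : IsStochasticSubgradientMethod f η x₀ x g)
    (hF : ∀ y, 𝔼 b, f b y = F y) (hη : ∀ t < N, 0 ≤ η t) (hg : ∀ ω, ∀ t < N, ‖g ω t‖ ^ 2 ≤ C)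
    (z : E) :
    ∑ t ∈ range N, 2 * η t * 𝔼 ω, (F (x ω t) - F z) ≤
      C * ∑ t ∈ range N, η t ^ 2 + ‖z - x₀‖ ^ 2 := by
  let D : ℕ → ℝ := fun t => 𝔼 ω, ‖z - x ω t‖ ^ 2
  have hD_zero : D 0 = ‖z - x₀‖ ^ 2 := by simp only [D, h.init, Fintype.expect_const]
  have hD_nonneg : 0 ≤ D N := expect_nonneg fun ω _ => sq_nonneg _
  calc ∑ t ∈ range N, 2 * η t * 𝔼 ω, (F (x ω t) - F z)
      ≤ ∑ t ∈ range N, (D t - D (t + 1) + C * η t ^ 2) := sum_le_sum fun t ht =>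
        h.two_mul_mul_expect_sub_le hF hη hg z ⟨t, mem_range.mp ht⟩
    _ = D 0 - D N + C * ∑ t ∈ range N, η t ^ 2 := by
        rw [sum_add_distrib, sum_range_sub', mul_sum]
    _ ≤ C * ∑ t ∈ range N, η t ^ 2 + ‖z - x₀‖ ^ 2 := by linarith

end IsStochasticSubgradientMethod

theorem inf'_le_div_of_sum_two_mul_mul_le {ι : Type*} {s : Finset ι} (hs : s.Nonempty)
    {w a : ι → ℝ} {B : ℝ} (hw : ∀ i ∈ s, 0 < w i) (hB : ∑ i ∈ s, 2 * w i * a i ≤ B) :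
    s.inf' hs a ≤ B / (2 * ∑ i ∈ s, w i) := by
  have hpos : 0 < ∑ i ∈ s, w i := sum_pos hw hs
  rw [le_div_iff₀ (by positivity), mul_comm, mul_sum, sum_mul]
  refine (sum_le_sum fun i hi => ?_).trans hB
  exact mul_le_mul_of_nonneg_left (inf'_le _ hi) (mul_nonneg zero_le_two (hw i hi).le)

end StochasticSubgradient

section OrderedSGD

open Finset
open scoped BigOperators

variable {ι E : Type*} {L : ι → E → ℝ} {R : E → ℝ} {q : ℕ}

/-- The regularized average loss `θ ↦ (1/q) ∑_{i ∈ Q} L_i(θ) + R(θ)` over a set `Q` of `q` indices,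
of which ordered SGD takes a subgradient. -/
noncomputable def selectedLoss (q : ℕ) (L : ι → E → ℝ) (R : E → ℝ) (Q : Finset ι) (θ : E) : ℝ :=
  1 / (q : ℝ) * ∑ i ∈ Q, L i θ + R θ

/-- The objective `L_q(θ) = (1/q) ∑_j γ_j b_{(j)}(θ) + R(θ)` minimized by ordered SGD. -/
noncomputable def orderedLoss {n : ℕ} (s q : ℕ) (L : Fin n → E → ℝ) (R : E → ℝ) (θ : E) : ℝ :=
  1 / (q : ℝ) * ∑ j, gammaR n s q j * sortDesc (fun i => L i θ) j + R θ

theorem selectedLoss_le_of_isTopSubset {S Q Q' : Finset ι} {θ : E}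
    (hQ : IsTopSubset (fun i => L i θ) q S Q) (hsub : Q' ⊆ S) (hcard : #Q' = q) :
    selectedLoss q L R Q' θ ≤ selectedLoss q L R Q θ := by
  have hsum := hQ.sum_le_sum hsub hcard
  unfold selectedLoss
  gcongr 1 / (q : ℝ) * ?_ + R θ

theorem expect_selectedLoss {n s : ℕ} {L : Fin n → E → ℝ} (hqs : q ≤ s) (hsn : s ≤ n)
    {Q : Batch n s → Finset (Fin n)} {θ : E} (hQ : ∀ S, IsTopSubset (fun i => L i θ) q S.1 (Q S)) :
    𝔼 S, selectedLoss q L R (Q S) θ = orderedLoss s q L R θ := by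
  have := nonempty_batch hsn
  simp only [selectedLoss, orderedLoss]
  rw [expect_add_distrib, ← mul_expect, expect_sum_isTopSubset hqs hQ, Fintype.expect_const]

theorem inv_pow_mul_sum_eq_expect (n s N : ℕ) (f : (Fin N → Batch n s) → ℝ) :
    ((#(powersetCard s (univ : Finset (Fin n))) : ℝ) ^ N)⁻¹ * ∑ ω, f ω = 𝔼 ω, f ω := by
  rw [Fintype.expect_eq_sum_div_card, Fintype.card_fun, card_batch, card_powersetCard, card_univ,
    Fintype.card_fin, Fintype.card_fin, Nat.cast_pow, div_eq_inv_mul]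

variable [NormedAddCommGroup E] {G₁ G₂ : ℝ}

theorem selectedLoss_sub_le (hq : 1 ≤ q) (hL : ∀ i x y, |L i x - L i y| ≤ G₁ * ‖x - y‖)
    (hR : ∀ x y, |R x - R y| ≤ G₂ * ‖x - y‖) {Q : Finset ι} (hQ : #Q = q) (x y : E) :
    selectedLoss q L R Q x - selectedLoss q L R Q y ≤ (G₁ + G₂) * ‖x - y‖ := by
  have hq_ne : (q : ℝ) ≠ 0 := by positivity
  have hsum : ∑ i ∈ Q, (L i x - L i y) ≤ q * (G₁ * ‖x - y‖) := by
    rw [← hQ, ← nsmul_eq_mul]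
    exact sum_le_card_nsmul _ _ _ fun i _ => (le_abs_self _).trans (hL i x y)
  calc selectedLoss q L R Q x - selectedLoss q L R Q y
      = 1 / (q : ℝ) * ∑ i ∈ Q, (L i x - L i y) + (R x - R y) := by
        rw [selectedLoss, selectedLoss, sum_sub_distrib]
        ring
    _ ≤ 1 / (q : ℝ) * (q * (G₁ * ‖x - y‖)) + G₂ * ‖x - y‖ := by
        gcongr
        exact (le_abs_self _).trans (hR x y)
    _ = (G₁ + G₂) * ‖x - y‖ := by field_simp

variable [InnerProductSpace ℝ E]

theorem IsSubgradientAt.selectedLoss_of_isTopSubset {S : Finset ι} {Q : E → Finset ι} {θ g : E}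
    (hQ : ∀ θ', IsTopSubset (fun i => L i θ') q S (Q θ'))
    (hg : IsSubgradientAt (selectedLoss q L R (Q θ)) θ g) :
    IsSubgradientAt (fun θ' => selectedLoss q L R (Q θ') θ') θ g := fun θ' =>
  (hg θ').trans (selectedLoss_le_of_isTopSubset (hQ θ') (hQ θ).1 (hQ θ).2.1)

theorem IsSubgradientAt.norm_sq_le_of_selectedLoss (hq : 1 ≤ q)
    (hL : ∀ i x y, |L i x - L i y| ≤ G₁ * ‖x - y‖) (hR : ∀ x y, |R x - R y| ≤ G₂ * ‖x - y‖)
    {Q : Finset ι} (hQ : #Q = q) {θ g : E} (hg : IsSubgradientAt (selectedLoss q L R Q) θ g) :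
    ‖g‖ ^ 2 ≤ 2 * (G₁ ^ 2 + G₂ ^ 2) := by
  have hnorm : ‖g‖ ≤ |G₁ + G₂| := hg.norm_le fun y => selectedLoss_sub_le hq hL hR hQ y θ
  calc ‖g‖ ^ 2 ≤ |G₁ + G₂| ^ 2 := by gcongr
    _ = (G₁ + G₂) ^ 2 := sq_abs _
    _ ≤ 2 * (G₁ ^ 2 + G₂ ^ 2) := add_sq_le

theorem stmt_16_general {n s q : ℕ} (hq : 1 ≤ q) (hqs : q ≤ s) (hsn : s ≤ n)
    {L : Fin n → E → ℝ} (hL : ∀ i x y, |L i x - L i y| ≤ G₁ * ‖x - y‖)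
    (hR : ∀ x y, |R x - R y| ≤ G₂ * ‖x - y‖) (z : E)
    {T : ℕ} {η : ℕ → ℝ} (hη : ∀ t ≤ T, 0 < η t) {θ₀ : E}
    {Q : Batch n s → E → Finset (Fin n)}
    (hQ : ∀ S θ, IsTopSubset (fun i => L i θ) q S.1 (Q S θ))
    {θ g : (Fin (T + 1) → Batch n s) → ℕ → E} (hθ₀ : ∀ ω, θ ω 0 = θ₀)
    (hstep : ∀ ω, ∀ t ≤ T, θ ω (t + 1) = θ ω t - η t • g ω t)
    (hg : ∀ ω (t : Fin (T + 1)),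
      IsSubgradientAt (selectedLoss q L R (Q (ω t) (θ ω t))) (θ ω t) (g ω t))
    (hdep : ∀ ω ω' (t : Fin (T + 1)), (∀ t' ≤ t, ω t' = ω' t') → g ω t = g ω' t) :
    (range (T + 1)).inf' nonempty_range_add_one
        (fun t => 𝔼 ω, (orderedLoss s q L R (θ ω t) - orderedLoss s q L R z)) ≤
      (2 * (G₁ ^ 2 + G₂ ^ 2) * ∑ t ∈ range (T + 1), η t ^ 2 + ‖z - θ₀‖ ^ 2) /
        (2 * ∑ t ∈ range (T + 1), η t) := by
  have := nonempty_batch hsn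
  have hmethod : IsStochasticSubgradientMethod
      (fun S θ' => selectedLoss q L R (Q S θ') θ') η θ₀ θ g :=
    { init := hθ₀
      step := fun ω t => hstep ω t t.is_le
      isSubgradientAt := fun ω t => (hg ω t).selectedLoss_of_isTopSubset (hQ (ω t))
      nonanticipating := hdep }
  have hnorm : ∀ ω, ∀ t < T + 1, ‖g ω t‖ ^ 2 ≤ 2 * (G₁ ^ 2 + G₂ ^ 2) := fun ω t ht =>
    (hg ω ⟨t, ht⟩).norm_sq_le_of_selectedLoss hq hL hR (hQ _ _).2.1
  refine inf'_le_div_of_sum_two_mul_mul_le _ (fun t ht => hη t (mem_range_succ_iff.mp ht)) ?_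
  exact hmethod.sum_two_mul_mul_expect_sub_le
    (fun θ' => expect_selectedLoss hqs hsn fun S => hQ S θ')
    (fun t ht => (hη t (Nat.le_of_lt_succ ht)).le) hnorm z

end OrderedSGD

/-- Theorem 2, part 1: convergence of ordered SGD in the convex setting.
Each `ω = (S_0,…,S_T)` is a sequence of mini-batches of size `s`; `θfn ω` is the ordered-SGD
iterate sequence started at `θ0` with steps `θ^{t+1} = θ^t − η_t g_ω^t`, where `g_ω^t` is a
subgradient at `θ_ω^t` of `θ ↦ (1/q) ∑_{i ∈ Q(S_t, θ_ω^t)} L i θ + R θ` and depends on `ω` only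
through `(S_0,…,S_t)`. The minimum over `t ≤ T` of the averaged optimality gap satisfies the
stated sublinear bound. -/
theorem stmt_16 (n s q : ℕ) (hq : 1 ≤ q) (hqs : q ≤ s) (hsn : s ≤ n)
    (E : Type*) [NormedAddCommGroup E] [InnerProductSpace ℝ E]
    (G₁ G₂ : ℝ)
    (L : Fin n → E → ℝ) (hLconv : ∀ i, ConvexOn ℝ Set.univ (L i))
    (hLlip : ∀ i x y, |L i x - L i y| ≤ G₁ * ‖x - y‖)
    (R : E → ℝ) (hRconv : ConvexOn ℝ Set.univ R)
    (hRlip : ∀ x y, |R x - R y| ≤ G₂ * ‖x - y‖)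
    (Lq : E → ℝ)
    (hLq : ∀ θ, Lq θ =
      (1 / (q : ℝ)) * ∑ j : Fin n, gammaR n s q j * sortDesc (fun i => L i θ) j + R θ)
    (θstar : E) (hθstar : ∀ θ, Lq θstar ≤ Lq θ)
    (T : ℕ) (η : ℕ → ℝ) (hη : ∀ t ≤ T, 0 < η t)
    (θ0 : E)
    (Qsel : Finset (Fin n) → E → Finset (Fin n))
    (hQsel : ∀ (S : Finset (Fin n)) (θ : E), S.card = s →
      Qsel S θ ⊆ S ∧ (Qsel S θ).card = q ∧
        ∀ i ∈ Qsel S θ, ∀ k ∈ S \ Qsel S θ, L k θ < L i θ ∨ (L k θ = L i θ ∧ i < k))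
    (θfn gfn : (Fin (T + 1) → {S : Finset (Fin n) // S.card = s}) → ℕ → E)
    (hθ0 : ∀ ω, θfn ω 0 = θ0)
    (hrec : ∀ ω, ∀ t ≤ T, θfn ω (t + 1) = θfn ω t - η t • gfn ω t)
    (hsub : ∀ ω, ∀ (t : ℕ) (ht : t ≤ T), ∀ θ' : E,
      (1 / (q : ℝ)) * (∑ i ∈ Qsel (ω ⟨t, Nat.lt_succ_of_le ht⟩).1 (θfn ω t), L i (θfn ω t))
          + R (θfn ω t) + ⟪gfn ω t, θ' - θfn ω t⟫
        ≤ (1 / (q : ℝ)) * (∑ i ∈ Qsel (ω ⟨t, Nat.lt_succ_of_le ht⟩).1 (θfn ω t), L i θ')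
            + R θ')
    (hdep : ∀ ω ω' (t : ℕ), t ≤ T →
      (∀ t' : Fin (T + 1), t'.val ≤ t → ω t' = ω' t') → gfn ω t = gfn ω' t) :
    (Finset.range (T + 1)).inf' (by simp) (fun t =>
        (((Finset.powersetCard s (Finset.univ : Finset (Fin n))).card : ℝ) ^ (T + 1))⁻¹ *
          ∑ ω : Fin (T + 1) → {S : Finset (Fin n) // S.card = s},
            (Lq (θfn ω t) - Lq θstar))
      ≤ (2 * (G₁ ^ 2 + G₂ ^ 2) * (∑ t ∈ Finset.range (T + 1), η t ^ 2)
            + ‖θstar - θ0‖ ^ 2)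
          / (2 * ∑ t ∈ Finset.range (T + 1), η t) := by
  obtain rfl : Lq = orderedLoss s q L R := funext hLq
  simp only [inv_pow_mul_sum_eq_expect]
  exact stmt_16_general hq hqs hsn hLlip hRlip θstar hη
    (fun S θ => .of_lt_or_eq_and_lt (hQsel S.1 θ S.2)) hθ0 hrec
    (fun ω t => hsub ω t t.is_le) (fun ω ω' t => hdep ω ω' t t.is_le)
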